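/- arXiv:0805.1144 — 2 statements merged into one kernel-verified Lean document; each statement's English description precedes it below -/
import Mathlib

section
/- Let d ≥ 2 be an integer. Let f_{-1} = 1 and f_0, …, f_{d-1} be integers, and define f'_{-1} = 1 and f'_j = f_j + C(d+1, j) for 0 ≤ j ≤ d-1. With g_k(f) = Σ_{i=0}^{k} (-1)^{k-i} · C(d+2-i, d+2-k) · f_{i-1}, one has g_1(f') = g_1(f) + 1, and g_k(f') = g_k(f) for every 2 ≤ k ≤ ⌊(d+1)/2⌋. -/
open Finset

/-- The `g`-numbers of a sequence `f : ℕ → ℤ` (with `f i` playing the role of `f_{i-1}`)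
for a `d`-manifold: `g_k(f) = ∑_{i=0}^{k} (-1)^{k-i} C(d+2-i, d+2-k) f i`. -/
def gVec (d : ℕ) (f : ℕ → ℤ) (k : ℕ) : ℤ :=
  ∑ i ∈ range (k + 1), (-1 : ℤ) ^ (k - i) * ((d + 2 - i).choose (d + 2 - k) : ℤ) * f i

theorem gVec_diff (d m : ℕ) (f f' : ℕ → ℤ) (hm : m + 1 ≤ d) (h0 : f' 0 = f 0)
    (hf' : ∀ j ≤ d - 1, f' (j + 1) = f (j + 1) + ((d + 1).choose j : ℤ)) :
    gVec d f' (m + 1) = gVec d f (m + 1) +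
      (-1) ^ m * ((d + 1).choose m : ℤ) *
        ∑ j ∈ range (m + 1), (-1 : ℤ) ^ j * (m.choose j : ℤ) := by
  unfold gVec
  rw [sum_range_succ' _ (m + 1), sum_range_succ' _ (m + 1), h0, mul_sum, add_right_comm,
    ← sum_add_distrib]
  congr 1
  refine sum_congr rfl fun j hj => ?_
  have hj' : j ≤ m := by simpa [Nat.lt_succ_iff] using hj
  rw [hf' j (by omega)]
  have e1 : d + 2 - (j + 1) = d + 1 - j := by omega
  have e2 : d + 2 - (m + 1) = d + 1 - m := by omega
  have e3 : m + 1 - (j + 1) = m - j := by omega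
  rw [e1, e2, e3]
  have hc : (d + 1 - j).choose (d + 1 - m) = (d + 1 - j).choose (m - j) :=
    Nat.choose_symm_of_eq_add (by omega)
  have key : ((d + 1).choose m : ℤ) * (m.choose j : ℤ)
      = ((d + 1).choose j : ℤ) * ((d + 1 - j).choose (m - j) : ℤ) := by
    exact_mod_cast Nat.choose_mul (n := d + 1) (k := m) (s := j) hj'
  have hs : (-1 : ℤ) ^ m * (-1) ^ j = (-1) ^ (m - j) := by
    obtain ⟨t, rfl⟩ := Nat.exists_eq_add_of_le hj'
    rw [Nat.add_sub_cancel_left, pow_add, mul_right_comm, ← mul_pow]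
    simp
  rw [hc, ← hs]
  linear_combination (-(-1 : ℤ) ^ m * (-1) ^ j) * key

/-- Effect of the subdivision operation on the `g`-vector: if `d ≥ 2`, `f 0 = 1 = f' 0`
(the `f_{-1}`-entries) and `f'_j = f_j + C(d+1, j)` for `0 ≤ j ≤ d-1`, then
`g₁(f') = g₁(f) + 1` and `g_k(f') = g_k(f)` for `2 ≤ k ≤ ⌊(d+1)/2⌋`. -/
theorem g_vector_subdivision (d : ℕ) (hd : 2 ≤ d) (f f' : ℕ → ℤ)
    (hfm1 : f 0 = 1) (hf'm1 : f' 0 = 1)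
    (hf' : ∀ j ≤ d - 1, f' (j + 1) = f (j + 1) + ((d + 1).choose j : ℤ)) :
    gVec d f' 1 = gVec d f 1 + 1 ∧
      ∀ k, 2 ≤ k → k ≤ (d + 1) / 2 → gVec d f' k = gVec d f k := by
  have h0 : f' 0 = f 0 := by rw [hfm1, hf'm1]
  constructor
  · rw [gVec_diff d 0 f f' (by omega) h0 hf']
    simp
  · intro k hk hkd
    obtain ⟨m, rfl⟩ : ∃ m, k = m + 1 := ⟨k - 1, by omega⟩
    rw [gVec_diff d m f f' (by omega) h0 hf',
      Int.alternating_sum_range_choose_of_ne (by omega)]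
    simp
end

section
/- Let d ≥ 3 be an integer. Let f_{-1} = 1 and f_0, …, f_{d-1} be integers, and define f'_{-1} = 1 and f'_j = f_j - C(d+1, j+1) for 0 ≤ j ≤ d-1. With g_k(f) = Σ_{i=0}^{k} (-1)^{k-i} · C(d+2-i, d+2-k) · f_{i-1}, one has g_1(f') = g_1(f) - (d+1), and g_k(f') = g_k(f) + (-1)^k · C(d+2, k) for every 2 ≤ k ≤ ⌊(d+1)/2⌋. -/
open Finset

lemma alt_aux (n k : ℕ) (hk : 1 ≤ k) (hkn : k ≤ n) :
    ∑ i ∈ range (k + 1), (-1 : ℤ) ^ i * ((n - i).choose (k - i) : ℤ) * (n.choose i : ℤ) = 0 := by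
  have h := Int.alternating_sum_range_choose (n := k)
  rw [if_neg (by omega)] at h
  have h2 : ∑ i ∈ range (k + 1), (-1 : ℤ) ^ i * ((n - i).choose (k - i) : ℤ) * (n.choose i : ℤ)
      = (n.choose k : ℤ) * ∑ i ∈ range (k + 1), (-1 : ℤ) ^ i * (k.choose i : ℤ) := by
    rw [Finset.mul_sum]
    refine Finset.sum_congr rfl fun i hi => ?_
    have hi' : i ≤ k := by simpa [Nat.lt_succ_iff] using hi
    have h3 : (n.choose k : ℤ) * (k.choose i : ℤ)
        = (n.choose i : ℤ) * ((n - i).choose (k - i) : ℤ) := by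
      exact_mod_cast Nat.choose_mul hi'
    linear_combination -(-1 : ℤ) ^ i * h3
  rw [h2, h, mul_zero]

lemma gVec_choose (d k : ℕ) (hk : 2 ≤ k) (hkd : k ≤ d) :
    gVec d (fun i => ((d + 1).choose i : ℤ)) k = 0 := by
  obtain ⟨m, rfl⟩ : ∃ m, k = m + 1 := ⟨k - 1, by omega⟩
  have hA := alt_aux (d + 1) (m + 1) (by omega) (by omega)
  have hB := alt_aux (d + 1) m (by omega) (by omega)
  have key : gVec d (fun i => ((d + 1).choose i : ℤ)) (m + 1) = (-1 : ℤ) ^ (m + 1) *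
      (∑ i ∈ range (m + 1 + 1),
        (-1 : ℤ) ^ i * ((d + 1 - i).choose (m + 1 - i) : ℤ) * ((d + 1).choose i : ℤ)
      + ∑ i ∈ range (m + 1),
        (-1 : ℤ) ^ i * ((d + 1 - i).choose (m - i) : ℤ) * ((d + 1).choose i : ℤ)) := by
    unfold gVec
    rw [Finset.sum_range_succ, Finset.sum_range_succ _ (m + 1), add_right_comm,
      ← Finset.sum_add_distrib, mul_add, Finset.mul_sum]
    congr 1
    · refine Finset.sum_congr rfl fun i hi => ?_
      have hi' : i ≤ m := by simpa [Nat.lt_succ_iff] using hi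
      have e : (d + 2 - i).choose (d + 2 - (m + 1))
          = (d + 1 - i).choose (m - i) + (d + 1 - i).choose (m + 1 - i) := by
        rw [← Nat.choose_symm (by omega : d + 2 - (m + 1) ≤ d + 2 - i),
          show d + 2 - i - (d + 2 - (m + 1)) = (m - i) + 1 by omega,
          show d + 2 - i = (d + 1 - i) + 1 by omega, Nat.choose_succ_succ,
          show m + 1 - i = (m - i) + 1 by omega]
      have e2 : (-1 : ℤ) ^ (m + 1 - i) = (-1) ^ (m + 1) * (-1) ^ i := by
        rw [← pow_add, show m + 1 + i = (m + 1 - i) + 2 * i by omega, pow_add, pow_mul]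
        simp
      rw [e, e2]
      push_cast
      ring
    · have e3 : (-1 : ℤ) ^ (m + 1) * (-1) ^ (m + 1) = 1 := by
        rw [← mul_pow]; simp
      simp only [Nat.sub_self, Nat.choose_self, pow_zero, Nat.choose_zero_right, Nat.cast_one]
      linear_combination -((d + 1).choose (m + 1) : ℤ) * e3
  rw [key, hA, hB]
  simp

/-- Effect of the handle addition operation on the `g`-vector: if `d ≥ 3`, `f 0 = 1 = f' 0`
(the `f_{-1}`-entries) and `f'_j = f_j - C(d+1, j+1)` for `0 ≤ j ≤ d-1`, then
`g₁(f') = g₁(f) - (d+1)` and `g_k(f') = g_k(f) + (-1)^k C(d+2, k)` for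
`2 ≤ k ≤ ⌊(d+1)/2⌋`. -/
theorem g_vector_handle_addition (d : ℕ) (hd : 3 ≤ d) (f f' : ℕ → ℤ)
    (hfm1 : f 0 = 1) (hf'm1 : f' 0 = 1)
    (hf' : ∀ j ≤ d - 1, f' (j + 1) = f (j + 1) - ((d + 1).choose (j + 1) : ℤ)) :
    gVec d f' 1 = gVec d f 1 - (d + 1) ∧
      ∀ k, 2 ≤ k → k ≤ (d + 1) / 2 →
        gVec d f' k = gVec d f k + (-1 : ℤ) ^ k * ((d + 2).choose k : ℤ) := by
  constructor
  · have h := hf' 0 (by omega)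
    simp only [zero_add, Nat.choose_one_right] at h
    simp [gVec, Finset.sum_range_succ, h, hfm1, hf'm1]
    ring
  · intro k hk hkd
    have h0 := gVec_choose d k hk (by omega)
    have e : gVec d f' k = gVec d f k - gVec d (fun i => ((d + 1).choose i : ℤ)) k
        + (-1 : ℤ) ^ k * ((d + 2).choose k : ℤ) := by
      unfold gVec
      rw [Finset.sum_range_succ', Finset.sum_range_succ' _ k, Finset.sum_range_succ' _ k]
      have hs : ∀ i ∈ range k, (-1 : ℤ) ^ (k - (i + 1)) *
          ((d + 2 - (i + 1)).choose (d + 2 - k) : ℤ) * f' (i + 1)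
          = (-1 : ℤ) ^ (k - (i + 1)) * ((d + 2 - (i + 1)).choose (d + 2 - k) : ℤ) * f (i + 1)
          - (-1 : ℤ) ^ (k - (i + 1)) * ((d + 2 - (i + 1)).choose (d + 2 - k) : ℤ)
            * ((d + 1).choose (i + 1) : ℤ) := by
        intro i hi
        have := Finset.mem_range.mp hi
        rw [hf' i (by omega)]
        ring
      rw [Finset.sum_congr rfl hs, Finset.sum_sub_distrib, hfm1, hf'm1]
      simp only [Nat.sub_zero, Nat.choose_zero_right, Nat.cast_one]
      rw [Nat.choose_symm (by omega : k ≤ d + 2)]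
      ring
    rw [e, h0, sub_zero]
end
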